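/- Simulation of arbitrary monotone Boolean functions by the fungal sandpile automaton with word V⁴H⁴: for every n ≥ 1 and every function f : (Fin n → Bool) → Bool that is monotone with respect to the pointwise order (false ≤ true), there exist T ≥ 1, a finitely supported configuration c : ℤ × ℤ → ℕ, an injective assignment of input cells i : Fin n → ℤ × ℤ, and an output cell o distinct from all input cells with c(o) = 0, such that for every input vector b : Fin n → Bool, running the automaton with the word V⁴H⁴ repeated periodically from the configuration c + ∑_{k} 4·[b(k)]·δ_{i(k)}, the cell o holds a positive number of chips at some time step t ≤ T if and only if f(b) is true. -/

import Mathlib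

/-- The H-step of the fungal sandpile automaton: every cell with at least 4 chips
loses 2 chips and sends one chip to each of its two horizontal neighbours. -/
def Hstep (c : ℤ × ℤ → ℕ) : ℤ × ℤ → ℕ := fun v =>
  c v - 2 * (if 4 ≤ c v then 1 else 0)
    + (if 4 ≤ c (v - (1, 0)) then 1 else 0)
    + (if 4 ≤ c (v + (1, 0)) then 1 else 0)

/-- The V-step: analogous with the vertical neighbours. -/
def Vstep (c : ℤ × ℤ → ℕ) : ℤ × ℤ → ℕ := fun v =>
  c v - 2 * (if 4 ≤ c v then 1 else 0)
    + (if 4 ≤ c (v - (0, 1)) then 1 else 0)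
    + (if 4 ≤ c (v + (0, 1)) then 1 else 0)

inductive Letter | H | V
  deriving DecidableEq

/-- The step associated to a letter. -/
def Letter.step : Letter → (ℤ × ℤ → ℕ) → (ℤ × ℤ → ℕ)
  | .H => Hstep
  | .V => Vstep

/-- Apply the steps of a word in order (head first). -/
def runWord : List Letter → (ℤ × ℤ → ℕ) → (ℤ × ℤ → ℕ)
  | [], c => c
  | l :: ls, c => runWord ls (l.step c)

/-- Run the automaton `t` steps with the word `w` repeated periodically. -/
def runPeriodic (w : List Letter) (c : ℤ × ℤ → ℕ) : ℕ → (ℤ × ℤ → ℕ)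
  | 0 => c
  | t + 1 => (w.getD (t % w.length) Letter.H).step (runPeriodic w c t)

/-- One chip at `u`, zero elsewhere. -/
def delta (u : ℤ × ℤ) : ℤ × ℤ → ℕ := fun v => if v = u then 1 else 0

/-- Numerical value of a Boolean. -/
def bnum (b : Bool) : ℕ := if b then 1 else 0

/-- The word V⁴H⁴. -/
def wV4H4 : List Letter := [.V, .V, .V, .V, .H, .H, .H, .H]

/-!
In the coordinates `u = x - y`, `w = x + y` a signal, that is, a wave of topplings through cells
holding three chips, advances by one cell per step along a zigzag in the direction of `u` or `w`.
A monotone function is the disjunction of the conjunctions given by its true points. Horizontal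
wires carry the inputs; a vertical wire computes a conjunction, since it has a cell with only two
chips wherever it crosses an input of the conjunction and so is stopped unless that input supplies
the missing chip; the last horizontal wire collects the disjunction, as any vertical wire
reaching it starts the signal.

The run is not computed step by step: we write down the toppling times of all cells and verify that
they are consistent with the chip counts. All wires are periodic with period eight, and so are the
times up to a shift by the period of the word, so this reduces to the cells of a single `8 × 8`
block, for each of the finitely many ways in which wires and signals can meet in it.
-/

namespace FungalCircuit

/-! ### Schedules of topplings -/

/-- The axis along which topplings at time `τ` send their chips, when the word is V⁴H⁴. -/
def axis (τ : ℤ) : Letter := if τ % 8 < 4 then .V else .H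

/-- The chips sent to the cell `(u, w)` by neighbours toppling according to the schedule `S`, each
recorded by its time of departure. The coordinates are `u = x - y` and `w = x + y`, in which the
horizontal neighbours of a cell are `(u ± 1, w ± 1)` and the vertical ones `(u ± 1, w ∓ 1)`. -/
def arrivals (S : ℤ → ℤ → List ℤ) (u w : ℤ) : List ℤ :=
  (S (u - 1) (w - 1)).filter (axis · = .H) ++ (S (u + 1) (w + 1)).filter (axis · = .H) ++
  (S (u - 1) (w + 1)).filter (axis · = .V) ++ (S (u + 1) (w - 1)).filter (axis · = .V)

/-- The number of chips at time `t` on a cell that starts with `k` chips, receives one chip at each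
of the times in `arr` and topples at each of the times in `own`. -/
def balance (k : ℤ) (arr own : List ℤ) (t : ℤ) : ℤ :=
  k + arr.countP (· < t) - 2 * own.countP (· < t)

theorem balance_map_add (k : ℤ) (arr own : List ℤ) (d t : ℤ) :
    balance k (arr.map (· + d)) (own.map (· + d)) t = balance k arr own (t - d) := by
  simp only [balance, List.countP_map, Function.comp_def, lt_sub_iff_add_lt]

theorem balance_append (k : ℤ) {l : List ℤ} (arr own : List ℤ) {t : ℤ} (hl : ∀ τ ∈ l, τ < t) :
    balance k (l ++ arr) own t = balance (k + l.length) arr own t := by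
  have : l.countP (· < t) = l.length := List.countP_eq_length.2 (by simpa using hl)
  simp only [balance, List.countP_append, this]
  push_cast
  ring

/-- `S` lists the toppling times of every cell when the automaton starts from `c`, expressed as a
consistency condition: a cell is scheduled exactly when the schedule brings its count to `4`. -/
structure IsSchedule (c : ℤ → ℤ → ℕ) (S : ℤ → ℤ → List ℤ) : Prop where
  nodup : ∀ u w, (S u w).Nodup
  nonneg : ∀ u w, ∀ τ ∈ S u w, 0 ≤ τ
  mem_iff : ∀ u w t, 0 ≤ t → (t ∈ S u w ↔ 4 ≤ balance (c u w) (arrivals S u w) (S u w) t)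

theorem countP_lt_succ {l : List ℤ} (hl : l.Nodup) (t : ℤ) :
    l.countP (· < t + 1) = l.countP (· < t) + if t ∈ l then 1 else 0 := by
  induction l with
  | nil => simp
  | cons a l ih =>
    rw [List.nodup_cons] at hl
    have := ih hl.2
    have split :
        (if a < t + 1 then 1 else 0) = (if a < t then 1 else 0) + if t = a then 1 else 0 := by
      split_ifs <;> omega
    by_cases hta : t = a
    · obtain rfl := hta
      simp only [List.countP_cons, decide_eq_true_eq, split, this, List.mem_cons, hl.1, true_or,
        if_true, if_false]
      omega
    · simp only [List.countP_cons, decide_eq_true_eq, split, this, List.mem_cons, hta, false_or,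
        if_false]
      omega

theorem countP_filter_lt_succ {l : List ℤ} (hl : l.Nodup) (a : Letter) (t : ℤ) :
    (l.filter (axis · = a)).countP (· < t + 1) =
      (l.filter (axis · = a)).countP (· < t) + if t ∈ l ∧ axis t = a then 1 else 0 := by
  simp only [countP_lt_succ (hl.filter _), List.mem_filter, decide_eq_true_eq]

theorem getD_wV4H4 (t : ℕ) : wV4H4.getD (t % wV4H4.length) Letter.H = axis t := by
  have h : t % 8 < 8 := Nat.mod_lt _ (by norm_num)
  have h' : (t : ℤ) % 8 = (t % 8 : ℕ) := by norm_num
  rw [axis, h', show wV4H4.length = 8 from rfl]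
  interval_cases t % 8 <;> rfl

theorem step_eq_balance {c : ℤ → ℤ → ℕ} {S : ℤ → ℤ → List ℤ} (h : IsSchedule c S) {t : ℤ}
    (ht : 0 ≤ t) {d : ℤ × ℤ → ℕ}
    (hd : ∀ x y, (d (x, y) : ℤ) =
      balance (c (x - y) (x + y)) (arrivals S (x - y) (x + y)) (S (x - y) (x + y)) t) (x y : ℤ) :
    ((axis t).step d (x, y) : ℤ) =
      balance (c (x - y) (x + y)) (arrivals S (x - y) (x + y)) (S (x - y) (x + y)) (t + 1) := by
  have topples (x y : ℤ) : 4 ≤ d (x, y) ↔ t ∈ S (x - y) (x + y) := by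
    rw [h.mem_iff _ _ t ht, ← hd]
    norm_cast
  have key := hd x y
  have up (x y : ℤ) : x - (y + 1) = x - y - 1 ∧ x + (y + 1) = x + y + 1 := by omega
  have down (x y : ℤ) : x - (y - 1) = x - y + 1 ∧ x + (y - 1) = x + y - 1 := by omega
  have right (x y : ℤ) : x + 1 - y = x - y + 1 ∧ x + 1 + y = x + y + 1 := by omega
  have left (x y : ℤ) : x - 1 - y = x - y - 1 ∧ x - 1 + y = x + y - 1 := by omega
  have enough : 2 * (if t ∈ S (x - y) (x + y) then 1 else 0) ≤ d (x, y) := by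
    split_ifs with hown
    · have := (topples x y).2 hown
      omega
    · exact Nat.zero_le _
  simp only [balance, arrivals, List.countP_append, countP_filter_lt_succ (h.nodup _ _),
    countP_lt_succ (h.nodup _ _)] at key ⊢
  cases ha : axis t <;>
    simp only [Letter.step, Hstep, Vstep, Prod.mk_sub_mk, Prod.mk_add_mk, topples, sub_zero,
      add_zero, up, down, left, right, and_true, and_false, reduceCtorEq, if_false] <;>
    omega

theorem IsSchedule.runPeriodic_eq {c : ℤ → ℤ → ℕ} {S : ℤ → ℤ → List ℤ} (h : IsSchedule c S)
    (t : ℕ) (x y : ℤ) :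
    (runPeriodic wV4H4 (fun v => c (v.1 - v.2) (v.1 + v.2)) t (x, y) : ℤ) =
      balance (c (x - y) (x + y)) (arrivals S (x - y) (x + y)) (S (x - y) (x + y)) t := by
  induction t generalizing x y with
  | zero =>
    have later (u w : ℤ) (τ : ℤ) (hτ : τ ∈ S u w) : ¬ τ < 0 := (h.nonneg u w τ hτ).not_gt
    have none_before {l : List ℤ} (hl : ∀ τ ∈ l, ¬ τ < 0) : l.countP (· < 0) = 0 :=
      List.countP_eq_zero.2 (by simpa using hl)
    have harr : ∀ τ ∈ arrivals S (x - y) (x + y), ¬ τ < 0 := by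
      simp only [arrivals, List.mem_append, List.mem_filter]
      rintro τ (((hτ | hτ) | hτ) | hτ) <;> exact later _ _ τ hτ.1
    simp [runPeriodic, balance, none_before harr, none_before (later _ _)]
  | succ t ih =>
    rw [runPeriodic, getD_wV4H4]
    exact_mod_cast step_eq_balance h (Int.natCast_nonneg t) ih x y

/-- A toppling record `own` of a cell that is consistent with its chip count, as far as it can be
checked by inspecting finitely many times: those at which the count may have just changed. -/
def Settled (k : ℤ) (arr own : List ℤ) : Prop :=
  k ≤ 3 ∧ own.Nodup ∧ (∀ τ ∈ own, 4 ≤ balance k arr own τ) ∧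
    ∀ τ ∈ own ++ arr, τ + 1 ∉ own → balance k arr own (τ + 1) ≤ 3

instance (k : ℤ) (arr own : List ℤ) : Decidable (Settled k arr own) :=
  inferInstanceAs (Decidable (_ ∧ _))

theorem Settled.mem_iff {k : ℤ} {arr own : List ℤ} (h : Settled k arr own) (t : ℤ) :
    t ∈ own ↔ 4 ≤ balance k arr own t := by
  obtain ⟨hk, -, hown, hnext⟩ := h
  refine ⟨hown t, fun ht => ?_⟩
  by_contra hmem
  suffices balance k arr own t ≤ 3 by omega
  clear ht
  obtain ⟨m, hm⟩ := (List.finite_toSet (own ++ arr)).bddBelow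
  have quiet {l : List ℤ} (hl : l ⊆ own ++ arr) {s : ℤ} (hs : s ≤ m) : l.countP (· < s) = 0 :=
    List.countP_eq_zero.2 fun τ hτ => by simpa using hs.trans (hm (hl hτ))
  have quiet_balance {s : ℤ} (hs : s ≤ m) : balance k arr own s ≤ 3 := by
    simpa [balance, quiet (List.subset_append_left _ _) hs,
      quiet (List.subset_append_right _ _) hs] using hk
  rcases le_total t m with htm | hmt
  · exact quiet_balance htm
  · induction t, hmt using Int.leInduction with
    | base => exact quiet_balance le_rfl
    | succ t _ ih =>
      by_cases hev : t ∈ own ++ arr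
      · exact hnext t hev hmem
      · have stable {l : List ℤ} (hl : t ∉ l) : l.countP (· < t + 1) = l.countP (· < t) :=
          List.countP_congr fun τ hτ => by
            have : τ ≠ t := fun h => hl (h ▸ hτ)
            simp only [decide_eq_true_eq]
            omega
        rw [List.mem_append, not_or] at hev
        simpa only [balance, stable hev.1, stable hev.2] using ih hev.1

/-- The list `[τ]` if the condition `on` holds, and the empty list otherwise. -/
def pulse (on : Bool) (τ : ℤ) : List ℤ := if on then [τ] else []

theorem map_pulse (on : Bool) (τ d : ℤ) : (pulse on τ).map (· + d) = pulse on (τ + d) := by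
  cases on <;> rfl

theorem pulse_false (τ : ℤ) : pulse false τ = [] := rfl

theorem mem_pulse {on : Bool} {τ t : ℤ} : t ∈ pulse on τ ↔ on ∧ t = τ := by
  cases on <;> simp [pulse]

theorem length_pulse_le (on : Bool) (τ : ℤ) : (pulse on τ).length ≤ 1 := by
  cases on <;> simp [pulse]

theorem balance_pulse_pos_iff {on : Bool} {τ t : ℤ} :
    0 < balance 0 (pulse on τ) [] t ↔ on ∧ τ < t := by
  by_cases hτ : τ < t <;> cases on <;> simp [balance, pulse, hτ]

/-! ### The blocks of a circuit -/

/-- The data of an `8 × 8` block of cells, which determine its contents and its topplings. The flags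
`left`, `wire`, `right` tell whether a horizontal wire runs through the block to the left, this
block and the block to the right; `top` that this wire is the output bus and not an input row;
`live` that the row carries a signal; `col` that a column runs through the block, `source` that it
starts there, `gate` that it is stopped there unless the row is live; `feed` that a signal enters
on the column, `win` that a signal enters on the bus. -/
structure Tile where
  left : Bool
  wire : Bool
  right : Bool
  top : Bool
  live : Bool
  gate : Bool
  col : Bool
  source : Bool
  feed : Bool
  win : Bool

namespace Tile

variable (T : Tile)

/-- Whether the horizontal wire is present at abscissa `p ∈ [-1, 8]`. -/
def band (p : ℤ) : Bool := if p < 0 then T.left else if p < 8 then T.wire else T.right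

/-- Whether `(p, q)` lies on the zigzag of the input row. -/
def onRow (p q : ℤ) : Bool := !T.top && T.band p && q == 2 + (p % 8 - 4).natAbs

/-- Whether `(p, q)` lies on the zigzag of the output bus. -/
def onBus (p q : ℤ) : Bool := T.top && T.band p && q == 3 + ((p + 3) % 8 - 4).natAbs

/-- Whether `(p, q)` lies on the zigzag of the column, which ends where it meets the bus. -/
def onCol (p q : ℤ) : Bool :=
  T.col && (!T.source || 7 ≤ q) && (!T.top || q < 3) && p == 1 + (q % 8 - 3).natAbs

/-- Whether a signal leaves the block on the column. -/
def out : Bool := T.feed && (!T.gate || T.live)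

/-- The toppling times of the cell `(p, q)`, where `p, q ∈ [-1, 8]`. A signal visits each zigzag one
cell per step. Owing to the offset `17` a signal on the column arrives after that on the row, and
with `19` it joins the bus in step with a signal already there. The second and fifth pulses are
echoes: a wire crossed by another one is left with spare chips, which topple two steps behind the
signal. -/
def events (p q : ℤ) : List ℤ :=
  pulse (T.live && T.onRow p q) p ++
  pulse (T.live && T.wire && !T.top && T.col && !T.gate &&
    decide (3 ≤ p ∧ p ≤ 6 ∧ q = p - 2)) (p + 2) ++
  pulse (T.onCol p q && if q ≤ 0 then T.feed else T.out) (q + 17) ++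
  pulse (T.onBus p q && if p ≤ 0 then T.win else T.win || T.feed) (p + 19) ++
  pulse (T.top && T.wire && T.win && T.feed && decide (1 ≤ p ∧ p ≤ 3 ∧ q = p + 2)) (p + 21)

/-- Whether `(p, q)` is the first cell of a wire, which serves as input cell on a row. -/
def input (p q : ℤ) : Bool := !T.left && p == 0 && T.onRow p q

/-- Whether `(p, q)` is the cell of the column that needs a chip from the row to pass the signal. -/
def tap (p q : ℤ) : Bool := T.gate && q == 1 && T.onCol p q

/-- The number of chips on `(p, q)` before the signals are injected. -/
def base (p q : ℤ) : ℕ :=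
  if T.input p q then 0 else if T.tap p q then 2
  else if T.onRow p q || T.onCol p q || T.onBus p q then 3 else 0

/-- The times at which chips are dropped on `(p, q)` from outside to inject the signals: one step
before `events` has that cell topple. -/
def sparks (p q : ℤ) : List ℤ :=
  (if T.live && T.input p q then List.replicate 4 (-1) else []) ++
    pulse (T.source && q == 7 && T.onCol p q) 23

/-- The combinations of flags that occur in a circuit. -/
def Valid : Prop :=
  (T.win → T.top) ∧ (T.top → ¬ T.live) ∧ (T.top → T.wire → ¬ T.left → ¬ T.win) ∧
  (T.col → T.left = T.wire ∧ T.right = T.wire ∧ (T.live ∨ T.top → T.wire)) ∧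
  (T.feed → T.col) ∧ (T.gate → T.col ∧ T.wire ∧ ¬ T.top) ∧
  (T.source → T.feed ∧ ¬ T.wire ∧ ¬ T.live ∧ ¬ T.top)

instance : Decidable T.Valid := inferInstanceAs (Decidable (_ ∧ _))

theorem Valid.settled : ∀ {T : Tile}, T.Valid → ∀ p : ℕ, p < 8 → ∀ q : ℕ, q < 8 →
    Settled (T.base p q) (T.sparks p q ++ arrivals T.events p q) (T.events p q) := by
  rintro ⟨left, wire, right, top, live, gate, col, source, feed, win⟩
  revert left wire right top live gate col source feed win
  decide +kernel

/-- Compatibility of the block `T` with the block `T'` to its right. -/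
structure Beside (T T' : Tile) : Prop where
  left : T'.left = T.wire
  right : T.right = T'.wire
  top : T'.top = T.top
  live : T'.live = T.live
  win : T.top → T'.win = (T.win || T.feed)

/-- Compatibility of the block `T` with the block `T'` above it. -/
structure Below (T T' : Tile) : Prop where
  col : (T'.col && !T'.source) = (T.col && !T.top)
  feed : T.col → ¬ T.top → T'.feed = T.out

theorem onCol_eq_false {p : ℤ} (hp : p < 1 ∨ 5 < p) (q : ℤ) : T.onCol p q = false := by
  have off : (p == 1 + (q % 8 - 3).natAbs) = false := by rw [beq_eq_false_iff_ne]; omega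
  rw [onCol, off, Bool.and_false]

theorem events_of_not_mem_Icc {q : ℤ} (hq : q < 1 ∨ 6 < q) (hbus : T.top → q ≠ 7) (p : ℤ) :
    T.events p q = pulse (T.onCol p q && if q ≤ 0 then T.feed else T.out) (q + 17) := by
  have row : T.onRow p q = false := by
    have off : (q == 2 + (p % 8 - 4).natAbs) = false := by rw [beq_eq_false_iff_ne]; omega
    rw [onRow, off, Bool.and_false]
  have bus : T.onBus p q = false := by
    by_cases htop : T.top
    · have off : (q == 3 + ((p + 3) % 8 - 4).natAbs) = false := by
        rw [beq_eq_false_iff_ne]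
        have := hbus htop
        omega
      rw [onBus, off, Bool.and_false]
    · simp only [onBus, htop, Bool.false_and]
  have row_echo : ¬ (3 ≤ p ∧ p ≤ 6 ∧ q = p - 2) := by omega
  have bus_echo : ¬ (1 ≤ p ∧ p ≤ 3 ∧ q = p + 2) := by omega
  simp only [events, row, bus, decide_eq_false row_echo, decide_eq_false bus_echo, Bool.and_false,
    Bool.false_and, pulse_false, List.nil_append, List.append_nil]

theorem Beside.events_eight {T T' : Tile} (h : Beside T T') (q : ℤ) :
    T.events 8 q = (T'.events 0 q).map (· + 8) := by
  cases htop : T.top <;>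
    simp [events, map_pulse, pulse_false, onCol_eq_false, onRow, onBus, band, h.top, h.live,
      h.right, h.win, htop]

theorem Beside.events_seven {T T' : Tile} (h : Beside T T') (q : ℤ) :
    T.events 7 q = (T'.events (-1) q).map (· + 8) := by
  cases htop : T.top <;>
    simp [events, map_pulse, pulse_false, onCol_eq_false, onRow, onBus, band, h.top, h.live,
      h.left, h.win, htop]

theorem Below.events_eight {T T' : Tile} (h : Below T T') (p : ℤ) :
    T.events p 8 = (T'.events p 0).map (· + 8) := by
  cases hcol : T.col <;> cases htop : T.top <;>
    simp [events_of_not_mem_Icc, map_pulse, onCol, h.col, htop, hcol, h.feed]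

theorem Below.events_seven {T T' : Tile} (h : Below T T') (htop : ¬ T.top) (p : ℤ) :
    T.events p 7 = (T'.events p (-1)).map (· + 8) := by
  cases hcol : T.col <;>
    simp [events_of_not_mem_Icc, map_pulse, onCol, h.col, htop, hcol, h.feed]

theorem wire_or_col_of_mem_events {p q τ : ℤ} (hp : 0 ≤ p ∧ p < 8) (hq : 0 ≤ q)
    (hτ : τ ∈ T.events p q) :
    T.wire ∧ 0 ≤ τ ∨ T.col ∧ 17 ≤ τ ∧ (T.source → 24 ≤ τ) := by
  have band : T.band p = T.wire := by simp [Tile.band, hp.1.not_gt, hp.2]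
  simp only [events, onRow, onCol, onBus, band, List.mem_append, mem_pulse, Bool.and_eq_true,
    Bool.or_eq_true, Bool.not_eq_true', decide_eq_true_eq] at hτ
  obtain (((row | row_echo) | col) | bus) | bus_echo := hτ
  · exact .inl ⟨row.1.2.1.2, by omega⟩
  · exact .inl ⟨row_echo.1.1.1.1.1.2, by omega⟩
  · refine .inr ⟨col.1.1.1.1.1, by omega, fun hsource => ?_⟩
    have := col.1.1.1.1.2.resolve_left (by simp [hsource])
    omega
  · exact .inl ⟨bus.1.1.1.2, by omega⟩
  · exact .inl ⟨bus_echo.1.1.1.1.2, by omega⟩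

theorem wire_or_col_of_chips_ne_zero {p q : ℤ} (hp : 0 ≤ p ∧ p < 8)
    (h : T.base p q + (T.sparks p q).length ≠ 0) : T.wire ∨ T.col := by
  have band : T.band p = T.wire := by simp [Tile.band, hp.1.not_gt, hp.2]
  contrapose! h
  simp [base, sparks, input, tap, pulse, onRow, onCol, onBus, band, h]

theorem input_iff {p q : ℤ} :
    T.input p q ↔ ¬ T.left ∧ T.wire ∧ ¬ T.top ∧ p = 0 ∧ q = 6 := by
  constructor
  · intro h
    simp only [input, onRow, band, Bool.and_eq_true, Bool.not_eq_true', beq_iff_eq] at h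
    obtain ⟨⟨hleft, rfl⟩, ⟨htop, hwire⟩, hq⟩ := h
    simp_all
  · rintro ⟨hleft, hwire, htop, rfl, rfl⟩
    simp [input, onRow, band, hleft, hwire, htop]

theorem arrivals_events_zero_four (hleft : T.left) (hwire : ¬ T.wire) (htop : T.top)
    (hcol : ¬ T.col) (hfeed : ¬ T.feed) : arrivals T.events 0 4 = pulse T.win 18 := by
  obtain ⟨left, wire, right, top, live, gate, col, source, feed, win⟩ := T
  simp only [Bool.not_eq_true] at hleft hwire htop hcol hfeed
  subst hleft hwire htop hcol hfeed
  revert right live gate source win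
  decide

theorem events_seven_of_top (htop : T.top) (p : ℤ) :
    T.events p 7 = pulse (T.onBus p 7 && if p ≤ 0 then T.win else T.win || T.feed) (p + 19) := by
  have row : T.onRow p 7 = false := by
    rw [onRow, htop, Bool.not_true, Bool.false_and, Bool.false_and]
  have echo : ¬ (1 ≤ p ∧ p ≤ 3 ∧ 7 = p + 2) := by omega
  simp [events, row, onCol, htop, decide_eq_false echo, pulse_false]

end Tile

/-! ### The circuit of a disjunctive normal form -/

section Circuit

variable {n M : ℕ} (A : Fin M → Fin n → Bool) (b : Fin n → Bool)

/-- Whether the block `(I, J)` carries a horizontal wire. Row `J` starts in block `-J - 1`, and all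
columns are within `0 ≤ I < M`. -/
def hasWire (n M : ℕ) (I J : ℤ) : Bool := 0 ≤ J ∧ J ≤ n ∧ -J - 1 ≤ I ∧ I ≤ M

/-- Whether a column runs through the block `(I, J)`. Column `I` starts in row `-I - 4`, so that the
offset between columns and rows is compatible with injecting all signals at time `0`. -/
def hasCol (n M : ℕ) (I J : ℤ) : Bool := 0 ≤ I ∧ I < M ∧ -I - 4 ≤ J ∧ J ≤ n

/-- The block `(I, J)` of the circuit that evaluates the disjunction over `i` of the conjunction of
the inputs `b j` with `A i j`: row `j < n` carries the input `b j`, column `i` computes the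
conjunction, and the bus, in row `n`, computes the disjunction. -/
def tile (I J : ℤ) : Tile where
  left := hasWire n M (I - 1) J
  wire := hasWire n M I J
  right := hasWire n M (I + 1) J
  top := J = n
  live := ∃ j : Fin n, (j : ℤ) = J ∧ b j
  gate := ∃ i : Fin M, ∃ j : Fin n, (i : ℤ) = I ∧ (j : ℤ) = J ∧ A i j
  col := hasCol n M I J
  source := hasCol n M I J ∧ J = -I - 4
  feed := hasCol n M I J ∧ ∀ i : Fin M, (i : ℤ) = I → ∀ j : Fin n, (j : ℤ) < J → A i j → b j
  win := J = n ∧ ∃ i : Fin M, (i : ℤ) < I ∧ ∀ j, A i j → b j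

theorem tile_valid (I J : ℤ) : (tile A b I J).Valid := by
  simp only [Tile.Valid, tile, hasWire, hasCol, decide_eq_true_eq]
  refine ⟨?_, ?_, ?_, ?_, ?_, ?_, ?_⟩
  · exact And.left
  · rintro hJ ⟨j, hj, -⟩
    omega
  · rintro hJ _ _ ⟨-, i, hi, -⟩
    omega
  · rintro hcol
    refine ⟨?_, ?_, ?_⟩
    · rw [decide_eq_decide]; omega
    · rw [decide_eq_decide]; omega
    · rintro (⟨j, hj, -⟩ | h) <;> omega
  · exact And.left
  · rintro ⟨i, j, hi, hj, -⟩
    omega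
  · rintro ⟨hcol, hJ⟩
    refine ⟨⟨hcol, fun i hi j hj => by omega⟩, by omega, ?_, by omega⟩
    rintro ⟨j, hj, -⟩
    omega

theorem tile_beside (I J : ℤ) : (tile A b I J).Beside (tile A b (I + 1) J) where
  left := by simp only [tile, add_sub_cancel_right]
  right := rfl
  top := rfl
  live := rfl
  win htop := by
    obtain rfl : J = n := by simpa [tile] using htop
    rw [Bool.eq_iff_iff]
    simp only [tile, Bool.or_eq_true, decide_eq_true_eq, hasCol, true_and]
    constructor
    · rintro ⟨i, hi, h⟩
      obtain hi | rfl := (show (i : ℤ) < I ∨ (i : ℤ) = I by omega)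
      · exact .inl ⟨i, hi, h⟩
      · refine .inr ⟨by omega, fun i' hi' j _ hA => h j ?_⟩
        rwa [← Fin.ext (by exact_mod_cast hi' : (i' : ℕ) = i)]
    · rintro (⟨i, hi, h⟩ | ⟨⟨hI, hIM, -⟩, h⟩)
      · exact ⟨i, by omega, h⟩
      · lift I to ℕ using hI
        exact ⟨⟨I, by omega⟩, by simp, fun j => h _ rfl j (by simp)⟩

theorem tile_below (I J : ℤ) : (tile A b I J).Below (tile A b I (J + 1)) where
  col := by
    rw [Bool.eq_iff_iff]
    simp only [tile, hasCol, Bool.and_eq_true, Bool.not_eq_true', decide_eq_true_eq,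
      decide_eq_false_iff_not]
    omega
  feed hcol htop := by
    rw [Bool.eq_iff_iff]
    simp only [tile, hasCol, Tile.out, Bool.and_eq_true, Bool.or_eq_true, Bool.not_eq_true',
      decide_eq_true_eq, decide_eq_false_iff_not] at hcol htop ⊢
    constructor
    · rintro ⟨-, h⟩
      refine ⟨⟨hcol, fun i hi j hj => h i hi j (by omega)⟩, or_iff_not_imp_left.2 fun hgate => ?_⟩
      obtain ⟨i, j, hi, hj, hA⟩ := not_not.1 hgate
      exact ⟨j, hj, h i hi j (by omega) hA⟩
    · rintro ⟨⟨-, h⟩, hgate⟩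
      refine ⟨by omega, fun i hi j hj hA => ?_⟩
      obtain hj | hj := (show (j : ℤ) < J ∨ (j : ℤ) = J by omega)
      · exact h i hi j hj hA
      · obtain ⟨j', hj', hb⟩ := hgate.resolve_left (not_not.2 ⟨i, j, hi, hj, hA⟩)
        rwa [Fin.ext (by omega : (j : ℕ) = j')]

/-- The delay of the block `(I, J)`: every signal crosses a block in `8` steps. -/
def delay (I J : ℤ) : ℤ := 8 * (I + J + 1)

/-- The toppling times of the cell with coordinates `(p, q)` relative to the block `(I, J)`. -/
def blockEvents (I J p q : ℤ) : List ℤ := ((tile A b I J).events p q).map (· + delay I J)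

/-- The toppling times of the cell `(u, w)` of the circuit. -/
def schedule (u w : ℤ) : List ℤ := blockEvents A b (u / 8) (w / 8) (u % 8) (w % 8)

/-- The number of chips on the cell `(u, w)` of the circuit at time `0`. -/
def chips (u w : ℤ) : ℕ :=
  (tile A b (u / 8) (w / 8)).base (u % 8) (w % 8) +
    ((tile A b (u / 8) (w / 8)).sparks (u % 8) (w % 8)).length

theorem map_add_eight (l : List ℤ) (d : ℤ) : (l.map (· + 8)).map (· + d) = l.map (· + (8 + d)) := by
  simp only [List.map_map, Function.comp_def, add_assoc]

theorem blockEvents_succ_left (I J q : ℤ) :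
    blockEvents A b I J 8 q = blockEvents A b (I + 1) J 0 q := by
  rw [blockEvents, (tile_beside A b I J).events_eight, map_add_eight,
    show 8 + delay I J = delay (I + 1) J by unfold delay; ring, blockEvents]

theorem blockEvents_pred_left (I J q : ℤ) :
    blockEvents A b I J 7 q = blockEvents A b (I + 1) J (-1) q := by
  rw [blockEvents, (tile_beside A b I J).events_seven, map_add_eight,
    show 8 + delay I J = delay (I + 1) J by unfold delay; ring, blockEvents]

theorem blockEvents_succ_right (I J p : ℤ) :
    blockEvents A b I J p 8 = blockEvents A b I (J + 1) p 0 := by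
  rw [blockEvents, (tile_below A b I J).events_eight, map_add_eight,
    show 8 + delay I J = delay I (J + 1) by unfold delay; ring, blockEvents]

theorem blockEvents_pred_right (I p : ℤ) {J : ℤ} (hJ : J < n) :
    blockEvents A b I J p 7 = blockEvents A b I (J + 1) p (-1) := by
  have not_top : ¬ (tile A b I J).top := by simpa only [tile, decide_eq_true_eq] using hJ.ne
  rw [blockEvents, (tile_below A b I J).events_seven not_top, map_add_eight,
    show 8 + delay I J = delay I (J + 1) by unfold delay; ring, blockEvents]

theorem blockEvents_emod_left (I J q : ℤ) {p : ℤ} (hp : -1 ≤ p ∧ p ≤ 8) :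
    blockEvents A b I J p q = blockEvents A b (I + p / 8) J (p % 8) q := by
  obtain rfl | rfl | hp : p = -1 ∨ p = 8 ∨ 0 ≤ p ∧ p < 8 := by omega
  · have seven := blockEvents_pred_left A b (I - 1) J q
    rw [sub_add_cancel] at seven
    exact seven.symm
  · exact blockEvents_succ_left A b I J q
  · rw [Int.ediv_eq_zero_of_lt hp.1 hp.2, Int.emod_eq_of_lt hp.1 hp.2, add_zero]

theorem blockEvents_emod_right (I p : ℤ) {J q : ℤ} (hJ : J ≤ n) (hq : -1 ≤ q ∧ q ≤ 8) :
    blockEvents A b I J p q = blockEvents A b I (J + q / 8) p (q % 8) := by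
  obtain rfl | rfl | hq : q = -1 ∨ q = 8 ∨ 0 ≤ q ∧ q < 8 := by omega
  · have seven := blockEvents_pred_right A b I p (show J - 1 < n by omega)
    rw [sub_add_cancel] at seven
    exact seven.symm
  · exact blockEvents_succ_right A b I J p
  · rw [Int.ediv_eq_zero_of_lt hq.1 hq.2, Int.emod_eq_of_lt hq.1 hq.2, add_zero]

theorem schedule_block (I : ℤ) {J p q : ℤ} (hJ : J ≤ n) (hp : -1 ≤ p ∧ p ≤ 8)
    (hq : -1 ≤ q ∧ q ≤ 8) :
    schedule A b (8 * I + p) (8 * J + q) = blockEvents A b I J p q := by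
  rw [blockEvents_emod_left A b I J q hp, blockEvents_emod_right A b _ _ hJ hq, schedule]
  congr 1 <;> omega

theorem axis_add_delay (τ I J : ℤ) : axis (τ + delay I J) = axis τ := by
  simp only [axis, delay, Int.add_mul_emod_self_left]

theorem arrivals_schedule_block (I : ℤ) {J p q : ℤ} (hJ : J ≤ n) (hp : 0 ≤ p ∧ p < 8)
    (hq : 0 ≤ q ∧ q < 8) :
    arrivals (schedule A b) (8 * I + p) (8 * J + q) =
      (arrivals (tile A b I J).events p q).map (· + delay I J) := by
  have filter (l : List ℤ) (a : Letter) : (l.map (· + delay I J)).filter (axis · = a) =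
      (l.filter (axis · = a)).map (· + delay I J) := by
    simp only [List.filter_map, Function.comp_def, axis_add_delay]
  have hp' : (-1 ≤ p + 1 ∧ p + 1 ≤ 8) ∧ -1 ≤ p - 1 ∧ p - 1 ≤ 8 := by omega
  have hq' : (-1 ≤ q + 1 ∧ q + 1 ≤ 8) ∧ -1 ≤ q - 1 ∧ q - 1 ≤ 8 := by omega
  simp only [arrivals, add_assoc, add_sub_assoc, schedule_block A b I hJ, hp', hq', blockEvents,
    filter, List.map_append, and_self]

theorem add_delay_of_mem_sparks {I J p q τ : ℤ} (hτ : τ ∈ (tile A b I J).sparks p q) :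
    τ + delay I J = -1 := by
  rw [Tile.sparks, List.mem_append, mem_pulse, List.mem_ite_nil_right] at hτ
  obtain ⟨hinput, hτ⟩ | ⟨hsource, rfl⟩ := hτ
  · obtain ⟨hleft, hwire, -⟩ := (Tile.input_iff _).1 (Bool.and_elim_right hinput)
    simp only [tile, hasWire, decide_eq_true_eq] at hleft hwire
    rw [List.eq_of_mem_replicate hτ, delay]
    omega
  · simp only [tile, Bool.and_eq_true, decide_eq_true_eq] at hsource
    rw [delay]
    omega

theorem nonneg_of_mem_schedule {u w τ : ℤ} (hτ : τ ∈ schedule A b u w) : 0 ≤ τ := by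
  simp only [schedule, blockEvents, List.mem_map] at hτ
  obtain ⟨σ, hσ, rfl⟩ := hτ
  have := Tile.wire_or_col_of_mem_events _ (by omega) (by omega) hσ
  simp only [tile, hasWire, hasCol, decide_eq_true_eq, delay] at this ⊢
  omega

/-- The block containing the cell `(u, w)` is crossed neither by a horizontal wire nor by a
column. -/
def Vacant (n M : ℕ) (u w : ℤ) : Prop :=
  ¬ (hasWire n M (u / 8) (w / 8) ∨ hasCol n M (u / 8) (w / 8))

theorem schedule_eq_nil {u w : ℤ} (h : Vacant n M u w) : schedule A b u w = [] := by
  refine List.eq_nil_iff_forall_not_mem.2 fun τ hτ => h ?_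
  simp only [schedule, blockEvents, List.mem_map] at hτ
  obtain ⟨σ, hσ, -⟩ := hτ
  exact (Tile.wire_or_col_of_mem_events _ (by omega) (by omega) hσ).imp And.left And.left

theorem chips_eq_zero {u w : ℤ} (h : Vacant n M u w) : chips A b u w = 0 := by
  by_contra hchips
  exact h (Tile.wire_or_col_of_chips_ne_zero _ (by omega) hchips)

theorem vacant_of_le {u w : ℤ} (hw : 8 * n + 8 ≤ w) : Vacant n M u w := by
  simp only [Vacant, hasWire, hasCol, decide_eq_true_eq]
  omega

theorem length_schedule_le {u w : ℤ} (hw : 8 * n + 7 ≤ w) : (schedule A b u w).length ≤ 1 := by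
  obtain rfl | hw := hw.eq_or_lt
  · have hdiv : (8 * (n : ℤ) + 7) / 8 = n ∧ (8 * (n : ℤ) + 7) % 8 = 7 := by omega
    rw [schedule, hdiv.1, hdiv.2, blockEvents, List.length_map]
    rw [Tile.events_seven_of_top _ (decide_eq_true rfl)]
    exact length_pulse_le _ _
  · simp [schedule_eq_nil A b (vacant_of_le (show 8 * n + 8 ≤ w by omega))]

theorem settled_block (I J : ℤ) {p q : ℤ} (hp : 0 ≤ p ∧ p < 8) (hq : 0 ≤ q ∧ q < 8) :
    Settled ((tile A b I J).base p q)
      ((tile A b I J).sparks p q ++ arrivals (tile A b I J).events p q)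
      ((tile A b I J).events p q) := by
  lift p to ℕ using hp.1
  lift q to ℕ using hq.1
  exact (tile_valid A b I J).settled p (by omega) q (by omega)

theorem mem_schedule_block_iff (I : ℤ) {J p q t : ℤ} (hJ : J ≤ n) (hp : 0 ≤ p ∧ p < 8)
    (hq : 0 ≤ q ∧ q < 8) (ht : 0 ≤ t) :
    t ∈ schedule A b (8 * I + p) (8 * J + q) ↔
      4 ≤ balance (chips A b (8 * I + p) (8 * J + q))
        (arrivals (schedule A b) (8 * I + p) (8 * J + q))
        (schedule A b (8 * I + p) (8 * J + q)) t := by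
  have hdiv : ((8 * I + p) / 8 = I ∧ (8 * I + p) % 8 = p) ∧
      (8 * J + q) / 8 = J ∧ (8 * J + q) % 8 = q := by omega
  have past : ∀ τ ∈ (tile A b I J).sparks p q, τ < t - delay I J := fun τ hτ => by
    have := add_delay_of_mem_sparks A b hτ
    omega
  have shift : t ∈ blockEvents A b I J p q ↔ t - delay I J ∈ (tile A b I J).events p q := by
    simp only [blockEvents, List.mem_map, ← eq_sub_iff_add_eq, exists_eq_right]
  rw [arrivals_schedule_block A b I hJ hp hq, schedule, chips]
  simp only [hdiv]
  rw [shift, (settled_block A b I J hp hq).mem_iff, balance_append _ _ _ past, blockEvents,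
    balance_map_add, Nat.cast_add]

theorem balance_schedule_le_two {u w : ℤ} (hw : 8 * n + 8 ≤ w) (t : ℤ) :
    balance (chips A b u w) (arrivals (schedule A b) u w) (schedule A b u w) t ≤ 2 := by
  have above (v : ℤ) : schedule A b v (w + 1) = [] := schedule_eq_nil A b (vacant_of_le (by omega))
  have below (v : ℤ) (a : Letter) : ((schedule A b v (w - 1)).filter (axis · = a)).length ≤ 1 :=
    (List.length_filter_le ..).trans (length_schedule_le A b (by omega))
  have few : (arrivals (schedule A b) u w).length ≤ 2 := by
    simpa [arrivals, above] using add_le_add (below (u - 1) .H) (below (u + 1) .V)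
  have := (List.countP_le_length (p := (· < t))).trans few
  simp only [balance, chips_eq_zero A b (vacant_of_le hw), schedule_eq_nil A b (vacant_of_le hw),
    List.countP_nil]
  omega

theorem isSchedule_schedule : IsSchedule (chips A b) (schedule A b) where
  nodup u w := (settled_block A b _ _ (by omega) (by omega)).2.1.map (add_left_injective _)
  nonneg u w τ hτ := nonneg_of_mem_schedule A b hτ
  mem_iff u w t ht := by
    obtain hw | hw := le_or_gt (w / 8) n
    · have hu : 0 ≤ u % 8 ∧ u % 8 < 8 := by omega
      have block := mem_schedule_block_iff A b (u / 8) hw hu (q := w % 8) (by omega) ht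
      simpa only [Int.mul_ediv_add_emod] using block
    · have hw : 8 * n + 8 ≤ w := by omega
      have := balance_schedule_le_two A b (u := u) hw t
      simp only [schedule_eq_nil A b (vacant_of_le hw), List.not_mem_nil, false_iff] at this ⊢
      omega

theorem live_input_iff (u w : ℤ) :
    ((tile A b (u / 8) (w / 8)).live && (tile A b (u / 8) (w / 8)).input (u % 8) (w % 8)) ↔
      ∃ k : Fin n, b k ∧ u = -8 * k - 8 ∧ w = 8 * k + 6 := by
  rw [Bool.and_eq_true, Tile.input_iff]
  simp only [tile, hasWire, decide_eq_true_eq]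
  constructor
  · rintro ⟨⟨k, hk, hb⟩, h⟩
    exact ⟨k, hb, by omega, by omega⟩
  · rintro ⟨k, hb, rfl, rfl⟩
    exact ⟨⟨k, by omega, hb⟩, by omega, by omega, by omega, by omega, by omega⟩

/-- The input cell carrying the `k`-th input. -/
def inputCell (k : Fin n) : ℤ × ℤ := (-1, 8 * k + 7)

theorem inputCell_injective : Function.Injective (inputCell (n := n)) := fun k l h => by
  simp only [inputCell, Prod.mk.injEq] at h
  omega

theorem sum_bnum_mul_delta (v : ℤ × ℤ) :
    ∑ k, 4 * bnum (b k) * delta (inputCell k) v = if ∃ k, b k ∧ v = inputCell k then 4 else 0 := by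
  split_ifs with h
  · obtain ⟨k, hb, rfl⟩ := h
    rw [Finset.sum_eq_single k]
    · simp [bnum, delta, hb]
    · intro l _ hl
      simp [delta, inputCell_injective.ne hl.symm]
    · simp
  · refine Finset.sum_eq_zero fun k _ => ?_
    by_cases hb : b k <;> simp_all [bnum, delta]

/-- The configuration of the circuit before the inputs are added. -/
def circuit (v : ℤ × ℤ) : ℕ := chips A (fun _ => false) (v.1 - v.2) (v.1 + v.2)

theorem chips_eq_chips_false_add (u w : ℤ) :
    chips A b u w = chips A (fun _ => false) u w +
      if ∃ k : Fin n, b k ∧ u = -8 * k - 8 ∧ w = 8 * k + 6 then 4 else 0 := by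
  have base_eq : (tile A b (u / 8) (w / 8)).base = (tile A (fun _ => false) (u / 8) (w / 8)).base :=
    rfl
  have source_eq : (tile A b (u / 8) (w / 8)).source =
      (tile A (fun _ => false) (u / 8) (w / 8)).source := rfl
  have col_eq : (tile A b (u / 8) (w / 8)).onCol =
      (tile A (fun _ => false) (u / 8) (w / 8)).onCol := rfl
  simp only [chips, base_eq, Tile.sparks, source_eq, col_eq, live_input_iff, List.length_append,
    apply_ite List.length, List.length_replicate, List.length_nil, Bool.false_eq_true, false_and,
    exists_false, if_false]
  ring

theorem chips_eq_circuit_add (v : ℤ × ℤ) :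
    chips A b (v.1 - v.2) (v.1 + v.2) =
      circuit A v + ∑ k, 4 * bnum (b k) * delta (inputCell k) v := by
  have input_iff : (∃ k : Fin n, b k ∧ v.1 - v.2 = -8 * k - 8 ∧ v.1 + v.2 = 8 * k + 6) ↔
      ∃ k, b k ∧ v = inputCell k := by
    refine exists_congr fun k => and_congr_right fun _ => ?_
    simp only [inputCell, Prod.ext_iff]
    omega
  simp only [chips_eq_chips_false_add A b, input_iff, sum_bnum_mul_delta, circuit]

theorem finite_support_circuit : (Function.support (circuit A)).Finite := by
  refine (Set.finite_Icc ((-(8 * (n + M + 4)), -(8 * (n + M + 4))) : ℤ × ℤ)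
    (8 * (n + M + 4), 8 * (n + M + 4))).subset fun v hv => ?_
  have := mt (chips_eq_zero A _) hv
  simp only [Vacant, hasWire, hasCol, decide_eq_true_eq] at this
  simp only [Set.mem_Icc, Prod.le_def]
  omega

/-- The cell at which the output of the circuit is read, just beyond the end of the bus. -/
def outputCell (n M : ℕ) : ℤ × ℤ := (4 * M + 4 * n + 6, 4 * n - 4 * M - 2)

theorem inputCell_ne_outputCell (k : Fin n) : inputCell k ≠ outputCell n M := by
  simp only [inputCell, outputCell, Ne, Prod.mk.injEq]
  omega

theorem tile_outputCell :
    let T := tile A b (M + 1) n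
    T.left ∧ ¬ T.wire ∧ T.top ∧ ¬ T.col ∧ ¬ T.feed ∧ (T.win ↔ ∃ i, ∀ j, A i j → b j) := by
  simp only [tile, hasWire, hasCol, decide_eq_true_eq]
  refine ⟨by omega, by omega, trivial, by omega, by omega, ?_⟩
  simp only [true_and]
  exact exists_congr fun i => and_iff_right (by omega)

theorem outputCell_coords : (outputCell n M).1 - (outputCell n M).2 = 8 * (M + 1) + 0 ∧
    (outputCell n M).1 + (outputCell n M).2 = 8 * n + 4 := by
  simp only [outputCell]
  omega

theorem vacant_outputCell : Vacant n M (8 * (M + 1) + 0) (8 * n + 4) := by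
  simp only [Vacant, hasWire, hasCol, decide_eq_true_eq]
  omega

theorem runPeriodic_outputCell_pos_iff (t : ℕ) :
    0 < runPeriodic wV4H4
      (fun v => circuit A v + ∑ k, 4 * bnum (b k) * delta (inputCell k) v) t (outputCell n M) ↔
      (∃ i, ∀ j, A i j → b j) ∧ 8 * (M + n + 2) + 18 < t := by
  simp only [← chips_eq_circuit_add]
  have run := (isSchedule_schedule A b).runPeriodic_eq t (outputCell n M).1 (outputCell n M).2
  obtain ⟨left, wire, top, col, feed, win⟩ := tile_outputCell A b
  rw [outputCell_coords.1, outputCell_coords.2, chips_eq_zero A b vacant_outputCell,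
    schedule_eq_nil A b vacant_outputCell,
    arrivals_schedule_block A b _ le_rfl (by omega) (by omega),
    Tile.arrivals_events_zero_four _ left wire top col feed, map_pulse] at run
  rw [← Nat.cast_pos (α := ℤ), run, Nat.cast_zero, balance_pulse_pos_iff, win, delay]
  refine and_congr_right fun _ => ?_
  omega

theorem circuit_outputCell : circuit A (outputCell n M) = 0 := by
  rw [circuit, outputCell_coords.1, outputCell_coords.2, chips_eq_zero _ _ vacant_outputCell]

end Circuit

theorem exists_dnf_of_monotone {ι : Type*} [Finite ι] {f : (ι → Bool) → Bool} (hf : Monotone f) :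
    ∃ (M : ℕ) (A : Fin M → ι → Bool), ∀ b, (∃ i, ∀ j, A i j → b j) ↔ f b := by
  let e := Finite.equivFin {a // f a}
  refine ⟨_, fun i => (e.symm i).1, fun b => ⟨?_, fun hb => ⟨e ⟨b, hb⟩, by simp⟩⟩⟩
  rintro ⟨i, hi⟩
  exact hf (show (e.symm i).1 ≤ b from hi) (e.symm i).2

end FungalCircuit

/-- Simulation of arbitrary monotone Boolean functions by the fungal sandpile
automaton with the word V⁴H⁴. -/
theorem monotone_simulation_V4H4 (n : ℕ) (hn : 1 ≤ n)
    (f : (Fin n → Bool) → Bool) (hf : Monotone f) :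
    ∃ (T : ℕ) (c : ℤ × ℤ → ℕ) (i : Fin n → ℤ × ℤ) (o : ℤ × ℤ),
      1 ≤ T ∧ (Function.support c).Finite ∧
      Function.Injective i ∧ (∀ k : Fin n, i k ≠ o) ∧ c o = 0 ∧
      ∀ b : Fin n → Bool,
        (∃ t ≤ T, 0 < runPeriodic wV4H4
            (fun v => c v + ∑ k : Fin n, 4 * bnum (b k) * delta (i k) v) t o)
        ↔ f b = true := by
  obtain ⟨M, A, hA⟩ := FungalCircuit.exists_dnf_of_monotone hf
  refine ⟨8 * (M + n + 2) + 19, FungalCircuit.circuit A, FungalCircuit.inputCell,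
    FungalCircuit.outputCell n M, by omega, FungalCircuit.finite_support_circuit A,
    FungalCircuit.inputCell_injective, FungalCircuit.inputCell_ne_outputCell,
    FungalCircuit.circuit_outputCell A, fun b => ?_⟩
  simp only [FungalCircuit.runPeriodic_outputCell_pos_iff, hA]
  constructor
  · rintro ⟨_, _, hb, _⟩
    exact hb
  · exact fun hb => ⟨_, le_rfl, hb, by omega⟩
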